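/- arXiv:2003.10081 — 16 statements merged into one kernel-verified Lean document; each statement's English description precedes it below -/
import Mathlib

section
/- For any real gravitational constant g and any two states L = (h_L, vx_L, vy_L, Bx_L, By_L) with bottom value b_L and R = (h_R, vx_R, vy_R, Bx_R, By_R) with bottom value b_R, the EC flux F̃₁(L,R) satisfies the entropy conservation condition [V]·F̃₁(L,R) = [ψ₁] − [Φ]⟨hBx⟩ + g[h·b·vx] − g[h·vx]⟨b⟩. -/
open scoped BigOperators
noncomputable section
open Matrix

/-- A state of the 1D (x-split) shallow water MHD system together with
the bottom topography value `b`. -/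
structure SWState where
  h : ℝ
  vx : ℝ
  vy : ℝ
  Bx : ℝ
  By : ℝ
  b : ℝ

namespace SWMHD

/-- Mean `⟨a⟩ = (a_L + a_R)/2` of an expression in the state variables. -/
def amean (f : SWState → ℝ) (L R : SWState) : ℝ := (f L + f R) / 2

/-- Jump `[a] = a_R − a_L` of an expression in the state variables. -/
def ajump (f : SWState → ℝ) (L R : SWState) : ℝ := f R - f L

/-- Entropy variables `V`. -/
def entropyVars (g : ℝ) (U : SWState) : Fin 5 → ℝ :=
  ![g * (U.h + U.b) - (U.vx ^ 2 + U.vy ^ 2 + U.Bx ^ 2 + U.By ^ 2) / 2,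
    U.vx, U.vy, U.Bx, U.By]

/-- Jump of the entropy variables. -/
def vjump (g : ℝ) (L R : SWState) : Fin 5 → ℝ :=
  fun k => entropyVars g R k - entropyVars g L k

/-- Entropy potential `ψ₁ = ½ g h² vx`. -/
def psi1 (g : ℝ) (U : SWState) : ℝ := g * U.h ^ 2 * U.vx / 2

/-- `Φ = vx Bx + vy By`. -/
def Phi (U : SWState) : ℝ := U.vx * U.Bx + U.vy * U.By

/-- The physical flux `F₁` of the x-split system. -/
def physFlux (g : ℝ) (U : SWState) : Fin 5 → ℝ :=
  ![U.h * U.vx,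
    U.h * U.vx ^ 2 - U.h * U.Bx ^ 2 + g * U.h ^ 2 / 2,
    U.h * U.vx * U.vy - U.h * U.Bx * U.By,
    0,
    U.h * (U.vx * U.By - U.Bx * U.vy)]

/-- The physical entropy flux `q₁`. -/
def q1 (g : ℝ) (U : SWState) : ℝ :=
  ((U.vx ^ 2 + U.vy ^ 2 + U.Bx ^ 2 + U.By ^ 2) / 2 + g * U.h + g * U.b) * U.h * U.vx
    - U.h * U.Bx * (U.vx * U.Bx + U.vy * U.By)

/-- The entropy conservative (EC) two-point flux `F̃₁(L,R)`. -/
def ecFlux (g : ℝ) (L R : SWState) : Fin 5 → ℝ :=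
  ![amean (fun U => U.h) L R * amean (fun U => U.vx) L R,
    amean (fun U => U.h) L R * (amean (fun U => U.vx) L R) ^ 2
      + g / 2 * amean (fun U => U.h ^ 2) L R
      - amean (fun U => U.h * U.Bx) L R * amean (fun U => U.Bx) L R
      + g * (amean (fun U => U.h * U.b) L R
             - amean (fun U => U.h) L R * amean (fun U => U.b) L R),
    amean (fun U => U.h) L R * amean (fun U => U.vx) L R * amean (fun U => U.vy) L R
      - amean (fun U => U.h * U.Bx) L R * amean (fun U => U.By) L R,
    amean (fun U => U.h) L R * amean (fun U => U.vx) L R * amean (fun U => U.Bx) L R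
      - amean (fun U => U.h * U.Bx) L R * amean (fun U => U.vx) L R,
    amean (fun U => U.h) L R * amean (fun U => U.vx) L R * amean (fun U => U.By) L R
      - amean (fun U => U.h * U.Bx) L R * amean (fun U => U.vy) L R]

/-- The entropy conservation condition `[V]·F = [ψ₁] − [Φ]⟨hBx⟩ + g[h b vx] − g[h vx]⟨b⟩`
for a two-point numerical flux `F`. -/
def ecCondition (g : ℝ) (F : Fin 5 → ℝ) (L R : SWState) : Prop :=
  vjump g L R ⬝ᵥ F
    = ajump (psi1 g) L R
      - ajump Phi L R * amean (fun U => U.h * U.Bx) L R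
      + g * ajump (fun U => U.h * U.b * U.vx) L R
      - g * ajump (fun U => U.h * U.vx) L R * amean (fun U => U.b) L R

/-- The numerical entropy flux `q̃` built from a two-point flux value `F`. -/
def numEntropyFlux (g : ℝ) (F : Fin 5 → ℝ) (L R : SWState) : ℝ :=
  (fun k => (entropyVars g L k + entropyVars g R k) / 2) ⬝ᵥ F
    + amean Phi L R * amean (fun U => U.h * U.Bx) L R
    - amean (psi1 g) L R
    + g * amean (fun U => U.h * U.vx) L R * amean (fun U => U.b) L R
    - g * amean (fun U => U.h * U.b * U.vx) L R

/-- Conservative variables `U = (h, h vx, h vy, h Bx, h By)`. -/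
def consVar (U : SWState) : Fin 5 → ℝ :=
  ![U.h, U.h * U.vx, U.h * U.vy, U.h * U.Bx, U.h * U.By]

/-- The source vector `Ψ = (0,0,0,vx,vy)`. -/
def PsiVec (U : SWState) : Fin 5 → ℝ := ![0, 0, 0, U.vx, U.vy]

/-- The bottom-topography source vector `G₁ = (0, g h, 0, 0, 0)`. -/
def G1Vec (g : ℝ) (U : SWState) : Fin 5 → ℝ := ![0, g * U.h, 0, 0, 0]

/-- The mathematical entropy (total energy). -/
def entropyFn (g : ℝ) (U : SWState) : ℝ :=
  U.h * (U.vx ^ 2 + U.vy ^ 2 + U.Bx ^ 2 + U.By ^ 2) / 2 + g * U.h ^ 2 / 2 + g * U.h * U.b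

end SWMHD

open SWMHD

/-- the EC flux `F̃₁(L,R)` satisfies the entropy conservation condition
`[V]·F̃₁(L,R) = [ψ₁] − [Φ]⟨hBx⟩ + g[h b vx] − g[h vx]⟨b⟩`. -/
theorem ecFlux_satisfies_ecCondition (g : ℝ) (L R : SWState) :
    ecCondition g (ecFlux g L R) L R := by
  simp only [ecCondition, dotProduct, Fin.sum_univ_five, vjump, entropyVars, ecFlux, amean, ajump, psi1, Phi]
  simp
  ring
end
end

section
/- Let F be a symmetric two-point numerical flux that satisfies the entropy conservation condition for every pair of states. Then for any three consecutive grid states U_{i−1}, U_i, U_{i+1} with bottom values b_{i−1}, b_i, b_{i+1}, the telescoping identity V_i·(F(U_i,U_{i+1}) − F(U_{i−1},U_i)) + Φ_i·(⟨hBx⟩_{i+1/2} − ⟨hBx⟩_{i−1/2}) + g·h_i·vx_i·(⟨b⟩_{i+1/2} − ⟨b⟩_{i−1/2}) = q̃(U_i,U_{i+1}) − q̃(U_{i−1},U_i) holds, where ⟨a⟩_{i±1/2} denotes the mean of a over the corresponding pair of adjacent grid points and q̃ is the numerical entropy flux built from F. -/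
open scoped BigOperators
noncomputable section
open Matrix

open SWMHD

/-- telescoping identity for a symmetric two-point flux satisfying
the entropy conservation condition. -/
theorem telescoping_entropy_identity (g : ℝ)
    (F : SWState → SWState → (Fin 5 → ℝ))
    (hsymm : ∀ L R, F L R = F R L)
    (hEC : ∀ L R, ecCondition g (F L R) L R)
    (Um Ui Up : SWState) :
    entropyVars g Ui ⬝ᵥ (fun k => F Ui Up k - F Um Ui k)
      + Phi Ui * (amean (fun U => U.h * U.Bx) Ui Up - amean (fun U => U.h * U.Bx) Um Ui)
      + g * Ui.h * Ui.vx * (amean (fun U => U.b) Ui Up - amean (fun U => U.b) Um Ui)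
      = numEntropyFlux g (F Ui Up) Ui Up - numEntropyFlux g (F Um Ui) Um Ui := by
  have h1 := hEC Ui Up
  have h2 := hEC Um Ui
  simp only [ecCondition, numEntropyFlux, vjump, ajump, amean, dotProduct,
    Fin.sum_univ_five] at h1 h2 ⊢
  linear_combination (-1 / 2) * h1 - (1 / 2) * h2
end
end

section
/- (Entropy conservation of the semi-discrete scheme.) Let Δx > 0, let b_i be fixed bottom values, and let the primitive grid states (h_i(t), vx_i(t), vy_i(t), Bx_i(t), By_i(t)) be differentiable functions of time with h_i(t) > 0, whose conservative variables U_i = (h_i, h_i vx_i, h_i vy_i, h_i Bx_i, h_i By_i) satisfy the semi-discrete scheme dU_i/dt = −(F(U_i,U_{i+1}) − F(U_{i−1},U_i))/Δx − Ψ_iᵀ(⟨hBx⟩_{i+1/2} − ⟨hBx⟩_{i−1/2})/Δx − (G₁)_iᵀ(⟨b⟩_{i+1/2} − ⟨b⟩_{i−1/2})/Δx, where Ψ_i = (0,0,0,vx_i,vy_i), (G₁)_i = (0, g h_i, 0, 0, 0), and F is a two-point flux satisfying the entropy conservation condition for every pair of states. Then the discrete entropy identity d/dt η(U_i(t)) +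 (q̃(U_i,U_{i+1}) − q̃(U_{i−1},U_i))/Δx = 0 holds, where η := ½h(vx²+vy²+Bx²+By²) + ½gh² + ghb. -/
open scoped BigOperators
noncomputable section
open Matrix

open SWMHD

/-- entropy conservation of the semi-discrete scheme.  If the
conservative variables of differentiable positive-height primitive grid states
satisfy the semi-discrete EC scheme built from a two-point flux satisfying the
entropy conservation condition, then the discrete entropy identity
`d/dt η(U_i) + (q̃_{i+1/2} − q̃_{i−1/2})/Δx = 0` holds. -/
theorem semidiscrete_entropy_identity
    (g Δx : ℝ) (hΔx : 0 < Δx)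
    (h vx vy Bx By : ℤ → ℝ → ℝ) (b : ℤ → ℝ)
    (hdiff : ∀ i t, DifferentiableAt ℝ (h i) t ∧ DifferentiableAt ℝ (vx i) t ∧
      DifferentiableAt ℝ (vy i) t ∧ DifferentiableAt ℝ (Bx i) t ∧ DifferentiableAt ℝ (By i) t)
    (hpos : ∀ i t, 0 < h i t)
    (F : SWState → SWState → (Fin 5 → ℝ))
    (hEC : ∀ L R, ecCondition g (F L R) L R)
    (st : ℤ → ℝ → SWState)
    (hst : ∀ i t, st i t = ⟨h i t, vx i t, vy i t, Bx i t, By i t, b i⟩)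
    (i : ℤ)
    (scheme : ∀ (k : Fin 5) (t : ℝ),
      HasDerivAt (fun s => consVar (st i s) k)
        (-(F (st i t) (st (i+1) t) k - F (st (i-1) t) (st i t) k) / Δx
          - PsiVec (st i t) k *
              (amean (fun U => U.h * U.Bx) (st i t) (st (i+1) t)
                - amean (fun U => U.h * U.Bx) (st (i-1) t) (st i t)) / Δx
          - G1Vec g (st i t) k *
              (amean (fun U => U.b) (st i t) (st (i+1) t)
                - amean (fun U => U.b) (st (i-1) t) (st i t)) / Δx) t) :
    ∀ t : ℝ, HasDerivAt (fun s => entropyFn g (st i s))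
      (-(numEntropyFlux g (F (st i t) (st (i+1) t)) (st i t) (st (i+1) t)
          - numEntropyFlux g (F (st (i-1) t) (st i t)) (st (i-1) t) (st i t)) / Δx) t := by
  intro t
  obtain ⟨dh, dvx, dvy, dBx, dBy⟩ := hdiff i t
  have Hh := dh.hasDerivAt
  have Hvx := dvx.hasDerivAt
  have Hvy := dvy.hasDerivAt
  have HBx := dBx.hasDerivAt
  have HBy := dBy.hasDerivAt
  have s0 := scheme 0 t
  have s1 := scheme 1 t
  have s2 := scheme 2 t
  have s3 := scheme 3 t
  have s4 := scheme 4 t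
  have e1 := hEC (st i t) (st (i+1) t)
  have e2 := hEC (st (i-1) t) (st i t)
  generalize F (st i t) (st (i+1) t) = P at *
  generalize F (st (i-1) t) (st i t) = M at *
  simp only [hst, consVar, PsiVec, G1Vec, amean, Matrix.cons_val] at s0 s1 s2 s3 s4
  have u0 := Hh.unique s0
  have u1 := (Hh.fun_mul Hvx).unique s1
  have u2 := (Hh.fun_mul Hvy).unique s2
  have u3 := (Hh.fun_mul HBx).unique s3
  have u4 := (Hh.fun_mul HBy).unique s4
  simp only [ecCondition, vjump, entropyVars, ajump, amean, psi1, Phi, dotProduct,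
    Fin.sum_univ_five, hst, Matrix.cons_val] at e1 e2
  simp only [numEntropyFlux, entropyFn, entropyVars, amean, psi1, Phi, dotProduct,
    Fin.sum_univ_five, hst, Matrix.cons_val]
  have H := (((Hh.fun_mul ((((Hvx.fun_pow 2).fun_add (Hvy.fun_pow 2)).fun_add
    (HBx.fun_pow 2)).fun_add (HBy.fun_pow 2))).div_const 2).fun_add
    (((Hh.fun_pow 2).const_mul g).div_const 2)).fun_add ((Hh.const_mul g).mul_const (b i))
  refine H.congr_deriv ?_
  have hne : Δx ≠ 0 := hΔx.ne'
  push_cast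
  simp only [div_eq_mul_inv] at u0 u1 u2 u3 u4 ⊢
  linear_combination (g * (h i t + b i) - (vx i t ^ 2 + vy i t ^ 2 + Bx i t ^ 2 + By i t ^ 2) / 2) * u0
    + vx i t * u1 + vy i t * u2 + Bx i t * u3 + By i t * u4
    + Δx⁻¹ / 2 * e1 + Δx⁻¹ / 2 * e2
end
end

section
/- (Well-balanced property, lake at rest.) Let g and C be real numbers and let three consecutive grid states U_{i−1}, U_i, U_{i+1} with bottom values b_{i−1}, b_i, b_{i+1} satisfy vx_j = vy_j = Bx_j = By_j = 0 and h_j + b_j = C for j = i−1, i, i+1. Then the right-hand side of the semi-discrete EC scheme at grid point i vanishes: F̃₁(U_i,U_{i+1}) − F̃₁(U_{i−1},U_i) + Ψ_iᵀ(⟨hBx⟩_{i+1/2} − ⟨hBx⟩_{i−1/2}) + (G₁)_iᵀ(⟨b⟩_{i+1/2} − ⟨b⟩_{i−1/2}) = 0 ∈ ℝ⁵, where Ψ_i = (0,0,0,vx_i,vy_i), (G₁)_i = (0, g·h_i, 0, 0, 0), and ⟨a⟩_{i±1/2} denotes the mean over the corresponding pair of grid points. In particular the scheme preserves the steady state of a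 lake at rest with zero magnetic field. -/
open scoped BigOperators
noncomputable section
open Matrix

open SWMHD

/-- well-balanced property (lake at rest).  If the velocity and
magnetic field vanish and `h + b = C` at three consecutive grid points, then the
right-hand side of the semi-discrete EC scheme at the middle point vanishes. -/
theorem well_balanced_lake_at_rest (g C : ℝ) (Um Ui Up : SWState)
    (hm : Um.vx = 0 ∧ Um.vy = 0 ∧ Um.Bx = 0 ∧ Um.By = 0 ∧ Um.h + Um.b = C)
    (hi : Ui.vx = 0 ∧ Ui.vy = 0 ∧ Ui.Bx = 0 ∧ Ui.By = 0 ∧ Ui.h + Ui.b = C)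
    (hp : Up.vx = 0 ∧ Up.vy = 0 ∧ Up.Bx = 0 ∧ Up.By = 0 ∧ Up.h + Up.b = C) :
    (fun k => ecFlux g Ui Up k - ecFlux g Um Ui k
      + PsiVec Ui k * (amean (fun U => U.h * U.Bx) Ui Up - amean (fun U => U.h * U.Bx) Um Ui)
      + G1Vec g Ui k * (amean (fun U => U.b) Ui Up - amean (fun U => U.b) Um Ui))
      = (0 : Fin 5 → ℝ) := by
  obtain ⟨m1, m2, m3, m4, m5⟩ := hm
  obtain ⟨i1, i2, i3, i4, i5⟩ := hi
  obtain ⟨p1, p2, p3, p4, p5⟩ := hp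
  have hbm : Um.b = C - Um.h := by linarith
  have hbi : Ui.b = C - Ui.h := by linarith
  have hbp : Up.b = C - Up.h := by linarith
  funext k
  fin_cases k <;>
    simp [ecFlux, PsiVec, G1Vec, amean, m1, m2, m3, m4, i1, i2, i3, i4, p1, p2, p3, p4,
      hbm, hbi, hbp]
  ring
end
end

section
/- (Moving-equilibrium preservation of the second-order EC scheme.) Let g, C₁, C₂ be real numbers and let three consecutive grid states U_{i−1}, U_i, U_{i+1} with bottom values b_{i−1}, b_i, b_{i+1} have zero magnetic field (Bx_j = By_j = 0 for all j) and satisfy the 1D moving equilibrium conditions ⟨h⟩_{j+1/2}·⟨vx⟩_{j+1/2} = C₁ at both interfaces j+1/2 = i−1/2, i+1/2 and vx_j²/2 + g(h_j + b_j) = C₂ at all three grid points. Then the first and second components (the h- and h·vx-components) of the right-hand side of the semi-discrete EC scheme at grid point i vanish: the mass flux difference F̃₁(U_i,U_{i+1})⁽¹⁾ − F̃₁(U_{i−1},U_i)⁽¹⁾ = 0 and F̃₁(U_i,U_{i+1})⁽²⁾ − F̃₁(U_{i−1},U_i)⁽²⁾ + g·h_i·(⟨b⟩_{i+1/2} − ⟨b⟩_{i−1/2})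 = 0. -/
open scoped BigOperators
noncomputable section
open Matrix

open SWMHD

/-- moving-equilibrium preservation of the second-order EC scheme.
Under zero magnetic field and the 1D moving-equilibrium conditions, the `h`- and
`h·vx`-components of the right-hand side of the semi-discrete EC scheme vanish. -/
theorem moving_equilibrium (g C₁ C₂ : ℝ) (Um Ui Up : SWState)
    (hBm : Um.Bx = 0 ∧ Um.By = 0) (hBi : Ui.Bx = 0 ∧ Ui.By = 0) (hBp : Up.Bx = 0 ∧ Up.By = 0)
    (hmL : amean (fun U => U.h) Um Ui * amean (fun U => U.vx) Um Ui = C₁)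
    (hmR : amean (fun U => U.h) Ui Up * amean (fun U => U.vx) Ui Up = C₁)
    (hpm : Um.vx ^ 2 / 2 + g * (Um.h + Um.b) = C₂)
    (hpi : Ui.vx ^ 2 / 2 + g * (Ui.h + Ui.b) = C₂)
    (hpp : Up.vx ^ 2 / 2 + g * (Up.h + Up.b) = C₂) :
    ecFlux g Ui Up 0 - ecFlux g Um Ui 0 = 0 ∧
    ecFlux g Ui Up 1 - ecFlux g Um Ui 1
      + g * Ui.h * (amean (fun U => U.b) Ui Up - amean (fun U => U.b) Um Ui) = 0 := by
  obtain ⟨hm1, -⟩ := hBm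
  obtain ⟨hi1, -⟩ := hBi
  obtain ⟨hp1, -⟩ := hBp
  simp only [amean] at hmL hmR
  simp only [ecFlux, amean, Matrix.cons_val_zero, Matrix.cons_val_one, hm1, hi1, hp1]
  constructor
  · linear_combination hmR - hmL
  · linear_combination Ui.vx * hmR - Ui.vx * hmL + (Ui.h + Up.h) / 4 * (hpp - hpi)
      + (Um.h + Ui.h) / 4 * (hpi - hpm)
end
end

section
/- (Strict convexity of the entropy function.) Fix real numbers g > 0 and b. The entropy function in the conservative variables, η(h, m₁, m₂, n₁, n₂) := (m₁² + m₂² + n₁² + n₂²)/(2h) + g·h²/2 + g·h·b, is strictly convex on the open convex set { (h, m₁, m₂, n₁, n₂) ∈ ℝ⁵ : h > 0 }. -/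
/-- Jensen gap of `x² / (2h)`. -/
lemma quad_gap (s t h k x y : ℝ) (hh : 0 < h) (hk : 0 < k) (hs : 0 < s) (ht : 0 < t) :
    s * (x ^ 2 / (2 * h)) + t * (y ^ 2 / (2 * k))
      = (s * x + t * y) ^ 2 / (2 * (s * h + t * k))
        + s * t * (x * k - y * h) ^ 2 / (2 * h * k * (s * h + t * k)) := by
  have hH : 0 < s * h + t * k := by positivity
  have hH' := hH.ne'
  field_simp
  ring

/-- strict convexity of the entropy function.  For `g > 0` and a
fixed bottom value `b`, the entropy in the conservative variables
`η(h, m₁, m₂, n₁, n₂) = (m₁² + m₂² + n₁² + n₂²)/(2h) + g h²/2 + g h b`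
is strictly convex on the open convex set `{h > 0}` of `ℝ⁵`. -/
theorem entropy_strictConvexOn (g b : ℝ) (hg : 0 < g) :
    StrictConvexOn ℝ {p : Fin 5 → ℝ | 0 < p 0}
      (fun p => (p 1 ^ 2 + p 2 ^ 2 + p 3 ^ 2 + p 4 ^ 2) / (2 * p 0)
        + g * p 0 ^ 2 / 2 + g * p 0 * b) := by
  constructor
  · intro p hp q hq s t hs ht hst
    have := convex_Ioi (0 : ℝ) (x := p 0) hp (y := q 0) hq hs ht hst
    simpa using this
  · intro p hp q hq hne s t hs ht hst
    have hh : 0 < p 0 := hp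
    have hk : 0 < q 0 := hq
    have hH : 0 < s * p 0 + t * q 0 := by positivity
    have e (i : Fin 5) := quad_gap s t (p 0) (q 0) (p i) (q i) hh hk hs ht
    have hD : 0 < 2 * p 0 * q 0 * (s * p 0 + t * q 0) := by positivity
    have n (i : Fin 5) : 0 ≤ s * t * (p i * q 0 - q i * p 0) ^ 2
        / (2 * p 0 * q 0 * (s * p 0 + t * q 0)) := by positivity
    have hq2 : s * (g * p 0 ^ 2 / 2) + t * (g * q 0 ^ 2 / 2)
        = g * (s * p 0 + t * q 0) ^ 2 / 2 + g / 2 * (s * t * (p 0 - q 0) ^ 2) := by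
      obtain rfl : t = 1 - s := by linarith
      ring
    have n0 : 0 ≤ g / 2 * (s * t * (p 0 - q 0) ^ 2) := by positivity
    simp only [Pi.add_apply, Pi.smul_apply, smul_eq_mul, add_div]
    have e1 := e 1
    have e2 := e 2
    have e3 := e 3
    have e4 := e 4
    have n1 := n 1
    have n2 := n 2
    have n3 := n 3
    have n4 := n 4
    by_cases h0 : p 0 = q 0
    · obtain ⟨i, hi⟩ : ∃ i, p i ≠ q i := Function.ne_iff.mp hne
      have hpos : 0 < s * t * (p i * q 0 - q i * p 0) ^ 2
          / (2 * p 0 * q 0 * (s * p 0 + t * q 0)) := by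
        have : p i * q 0 - q i * p 0 ≠ 0 := by
          rw [h0, ← sub_mul]
          exact mul_ne_zero (sub_ne_zero.mpr hi) hk.ne'
        positivity
      fin_cases i
      · exact absurd h0 hi
      all_goals
        simp only [Fin.reduceFinMk, Fin.mk_one] at hpos
        linarith
    · have : 0 < g / 2 * (s * t * (p 0 - q 0) ^ 2) := by
        have := sub_ne_zero.mpr h0
        positivity
      linarith
end

section
/- (Positivity preservation of the local Lax–Friedrichs scheme.) Let g > 0, let (h_i, vx_i, Bx_i)_{i∈ℤ} be grid values with h_i > 0 for all i, and suppose M is a real number with |vx_i| + √(g·h_i + Bx_i²) ≤ M for all i. Define α_{i+1/2} := max(|vx_i| + √(g·h_i + Bx_i²), |vx_{i+1}| + √(g·h_{i+1} + Bx_{i+1}²)) and the Lax–Friedrichs mass flux f_{i+1/2} := ½(h_i·vx_i + h_{i+1}·vx_{i+1}) − ½·α_{i+1/2}·(h_{i+1} − h_i). If λ > 0 satisfies λ·M ≤ ½, then the forward-Euler update h_i^{new} := h_i − λ·(f_{i+1/2} − f_{i−1/2}) satisfies h_i^{new} > 0 for all i. -/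
noncomputable section

/-- The local Lax–Friedrichs viscosity `α_{i+1/2}`. -/
def alphaLF (g : ℝ) (h vx Bx : ℤ → ℝ) (i : ℤ) : ℝ :=
  max (|vx i| + Real.sqrt (g * h i + Bx i ^ 2))
      (|vx (i + 1)| + Real.sqrt (g * h (i + 1) + Bx (i + 1) ^ 2))

/-- The Lax–Friedrichs mass flux `f_{i+1/2}`. -/
def massFluxLF (g : ℝ) (h vx Bx : ℤ → ℝ) (i : ℤ) : ℝ :=
  (h i * vx i + h (i + 1) * vx (i + 1)) / 2
    - alphaLF g h vx Bx i * (h (i + 1) - h i) / 2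

/-- positivity preservation of the local Lax–Friedrichs scheme.
Under the CFL condition `λ·M ≤ ½`, the forward-Euler update of the water height
with the local Lax–Friedrichs mass flux remains positive. -/
theorem laxFriedrichs_positivity (g : ℝ) (hg : 0 < g)
    (h vx Bx : ℤ → ℝ) (hpos : ∀ i, 0 < h i)
    (M : ℝ) (hM : ∀ i, |vx i| + Real.sqrt (g * h i + Bx i ^ 2) ≤ M)
    (lam : ℝ) (hlam : 0 < lam) (hcfl : lam * M ≤ 1 / 2) :
    ∀ i : ℤ, 0 < h i - lam * (massFluxLF g h vx Bx i - massFluxLF g h vx Bx (i - 1)) := by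
  intro i
  have e : i - 1 + 1 = i := by ring
  have key : ∀ j, |vx j| < |vx j| + Real.sqrt (g * h j + Bx j ^ 2) := by
    intro j
    have h0 : 0 < g * h j + Bx j ^ 2 := by
      have := mul_pos hg (hpos j)
      positivity
    have := Real.sqrt_pos.mpr h0
    linarith
  have a1 : alphaLF g h vx Bx i ≤ M := max_le (hM _) (hM _)
  have a2 : alphaLF g h vx Bx (i - 1) ≤ M := max_le (hM _) (hM _)
  have b1 : vx (i + 1) < alphaLF g h vx Bx i :=
    lt_of_le_of_lt (le_abs_self _) (lt_of_lt_of_le (key (i + 1)) (le_max_right _ _))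
  have b2 : -vx (i - 1) < alphaLF g h vx Bx (i - 1) :=
    lt_of_le_of_lt (neg_le_abs _) (lt_of_lt_of_le (key (i - 1)) (le_max_left _ _))
  unfold massFluxLF
  rw [e]
  generalize alphaLF g h vx Bx i = p at *
  generalize alphaLF g h vx Bx (i - 1) = q at *
  have c1 : 0 < lam * (h (i + 1) * (p - vx (i + 1))) :=
    mul_pos hlam (mul_pos (hpos _) (by linarith))
  have c2 : 0 < lam * (h (i - 1) * (q + vx (i - 1))) :=
    mul_pos hlam (mul_pos (hpos _) (by linarith))
  have d1 : lam * p ≤ 1 / 2 := (mul_le_mul_of_nonneg_left a1 hlam.le).trans hcfl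
  have d2 : lam * q ≤ 1 / 2 := (mul_le_mul_of_nonneg_left a2 hlam.le).trans hcfl
  have c3 : 0 < h i * (1 - (lam * p + lam * q) / 2) :=
    mul_pos (hpos _) (by linarith)
  linarith
end
end

section
/- (The Lax–Friedrichs flux is entropy stable for flat bottom.) Let g > 0 and let L, R be two states with h_L > 0, h_R > 0 and zero bottom values b_L = b_R = 0. Suppose α ≥ max(|vx_L| + √(g·h_L + Bx_L²), |vx_R| + √(g·h_R + Bx_R²)). Then the Lax–Friedrichs flux F̂ᴸᶠ := ⟨F₁⟩ − (α/2)·[U], where [U] = ([h], [h·vx], [h·vy], [h·Bx], [h·By]) is the jump of the conservative variables, satisfies the entropy stability inequality [V]·F̂ᴸᶠ − [ψ₁] + [Φ]⟨hBx⟩ ≤ 0. -/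
open scoped BigOperators
noncomputable section
open Matrix

open SWMHD

/-- the Lax–Friedrichs flux is entropy stable for flat bottom:
`[V]·F̂ᴸᶠ − [ψ₁] + [Φ]⟨hBx⟩ ≤ 0`. -/
theorem laxFriedrichs_entropy_stable (g : ℝ) (hg : 0 < g)
    (L R : SWState) (hL : 0 < L.h) (hR : 0 < R.h)
    (hbL : L.b = 0) (hbR : R.b = 0) (α : ℝ)
    (hα : max (|L.vx| + Real.sqrt (g * L.h + L.Bx ^ 2))
              (|R.vx| + Real.sqrt (g * R.h + R.Bx ^ 2)) ≤ α) :
    vjump g L R ⬝ᵥ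
        (fun k => (physFlux g L k + physFlux g R k) / 2 - α / 2 * (consVar R k - consVar L k))
      - ajump (psi1 g) L R
      + ajump Phi L R * amean (fun U => U.h * U.Bx) L R ≤ 0 := by
  have h1 := (le_max_left _ _).trans hα
  have h2 := (le_max_right _ _).trans hα
  have s1 : |L.Bx| ≤ Real.sqrt (g * L.h + L.Bx ^ 2) :=
    Real.abs_le_sqrt (by nlinarith [mul_pos hg hL])
  have s2 : |R.Bx| ≤ Real.sqrt (g * R.h + R.Bx ^ 2) :=
    Real.abs_le_sqrt (by nlinarith [mul_pos hg hR])
  have k1 : |L.vx| + |L.Bx| ≤ α := by linarith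
  have k2 : |R.vx| + |R.Bx| ≤ α := by linarith
  obtain ⟨h, vx, vy, Bx, By, b⟩ := L
  obtain ⟨h2, vx2, vy2, Bx2, By2, b2⟩ := R
  simp only at hL hR hbL hbR k1 k2
  subst hbL hbR
  clear h1 h2 s1 s2 hα
  have a1 := le_abs_self vx
  have a2 := neg_abs_le vx
  have a3 := le_abs_self vx2
  have a4 := neg_abs_le vx2
  have b1 := le_abs_self Bx
  have b22 := neg_abs_le Bx
  have b3 := le_abs_self Bx2
  have b4 := neg_abs_le Bx2
  have n1 := abs_nonneg Bx
  have n2 := abs_nonneg Bx2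
  have p : 0 ≤ (h + h2) * α - (h2 * vx2 - h * vx) + (h2 * Bx2 - h * Bx) := by
    nlinarith [mul_nonneg hL.le (by linarith : 0 ≤ α + vx - Bx),
      mul_nonneg hR.le (by linarith : 0 ≤ α - vx2 + Bx2)]
  have q : 0 ≤ (h + h2) * α - (h2 * vx2 - h * vx) - (h2 * Bx2 - h * Bx) := by
    nlinarith [mul_nonneg hL.le (by linarith : 0 ≤ α + vx + Bx),
      mul_nonneg hR.le (by linarith : 0 ≤ α - vx2 - Bx2)]
  have r : 0 ≤ g * (h2 - h) ^ 2 * (2 * α - (vx2 - vx)) :=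
    mul_nonneg (by positivity) (by linarith)
  have P := mul_nonneg p (by positivity :
    0 ≤ ((vx2 - vx) + (Bx2 - Bx)) ^ 2 + ((vy2 - vy) + (By2 - By)) ^ 2)
  have Q := mul_nonneg q (by positivity :
    0 ≤ ((vx2 - vx) - (Bx2 - Bx)) ^ 2 + ((vy2 - vy) - (By2 - By)) ^ 2)
  simp only [vjump, dotProduct, Fin.sum_univ_five, entropyVars, physFlux, consVar, ajump, amean,
    psi1, Phi]
  simp
  linear_combination P / 8 + Q / 8 + r / 4
end
end

section
/- (Entropy production decomposition of the Lax–Friedrichs flux.) For any real g, any real α, and any two states L, R with zero bottom values, the Lax–Friedrichs flux F̂ᴸᶠ := ⟨F₁⟩ − (α/2)·[U] satisfies the exact algebraic identity [V]·F̂ᴸᶠ − [ψ₁] + [Φ]⟨hBx⟩ = A + B + C, where A := (g/4)·[h]²·([vx] − 2α), B := ¼·([vx]² + [Bx]²)·([h·vx] − 2α⟨h⟩) − ½·[h·Bx]·[vx]·[Bx], and C := ¼·([vy]² + [By]²)·([h·vx] − 2α⟨h⟩) − ½·[h·Bx]·[vy]·[By]. -/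
open scoped BigOperators
noncomputable section
open Matrix

open SWMHD

/-- entropy production decomposition of the Lax–Friedrichs flux,
an exact algebraic identity `[V]·F̂ᴸᶠ − [ψ₁] + [Φ]⟨hBx⟩ = A + B + C`. -/
theorem laxFriedrichs_entropy_decomposition (g α : ℝ) (L R : SWState)
    (hbL : L.b = 0) (hbR : R.b = 0) :
    vjump g L R ⬝ᵥ
        (fun k => (physFlux g L k + physFlux g R k) / 2 - α / 2 * (consVar R k - consVar L k))
      - ajump (psi1 g) L R
      + ajump Phi L R * amean (fun U => U.h * U.Bx) L R
    = g / 4 * (ajump (fun U => U.h) L R) ^ 2 * (ajump (fun U => U.vx) L R - 2 * α)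
      + ((1 / 4) * ((ajump (fun U => U.vx) L R) ^ 2 + (ajump (fun U => U.Bx) L R) ^ 2)
            * (ajump (fun U => U.h * U.vx) L R - 2 * α * amean (fun U => U.h) L R)
          - (1 / 2) * ajump (fun U => U.h * U.Bx) L R
            * ajump (fun U => U.vx) L R * ajump (fun U => U.Bx) L R)
      + ((1 / 4) * ((ajump (fun U => U.vy) L R) ^ 2 + (ajump (fun U => U.By) L R) ^ 2)
            * (ajump (fun U => U.h * U.vx) L R - 2 * α * amean (fun U => U.h) L R)
          - (1 / 2) * ajump (fun U => U.h * U.Bx) L R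
            * ajump (fun U => U.vy) L R * ajump (fun U => U.By) L R) := by
  simp only [dotProduct, Fin.sum_univ_five, vjump, entropyVars, physFlux, consVar, ajump, amean,
    psi1, Phi, hbL, hbR, Matrix.cons_val]
  ring
end
end

section
/- Let g > 0 and let L, R be two states with h_L > 0 and h_R > 0, and let α ≥ max(|vx_L| + √(g·h_L + Bx_L²), |vx_R| + √(g·h_R + Bx_R²)). Then B := ¼·([vx]² + [Bx]²)·([h·vx] − 2α⟨h⟩) − ½·[h·Bx]·[vx]·[Bx] ≤ 0. -/
open scoped BigOperators
noncomputable section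
open Matrix

open SWMHD

/-- the term `B` in the entropy production decomposition of the
Lax–Friedrichs flux is nonpositive. -/
theorem termB_nonpos (g : ℝ) (hg : 0 < g) (L R : SWState)
    (hL : 0 < L.h) (hR : 0 < R.h) (α : ℝ)
    (hα : max (|L.vx| + Real.sqrt (g * L.h + L.Bx ^ 2))
              (|R.vx| + Real.sqrt (g * R.h + R.Bx ^ 2)) ≤ α) :
    (1 / 4) * ((ajump (fun U => U.vx) L R) ^ 2 + (ajump (fun U => U.Bx) L R) ^ 2)
        * (ajump (fun U => U.h * U.vx) L R - 2 * α * amean (fun U => U.h) L R)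
      - (1 / 2) * ajump (fun U => U.h * U.Bx) L R
        * ajump (fun U => U.vx) L R * ajump (fun U => U.Bx) L R ≤ 0 := by
  have key : ∀ b c p q : ℝ, |b| ≤ c → 0 ≤ (p ^ 2 + q ^ 2) * c + 2 * b * p * q := by
    intro b c p q h
    obtain ⟨h1, h2⟩ := abs_le.mp h
    have e1 : 0 ≤ (c + b) * (p + q) ^ 2 := mul_nonneg (by linarith) (sq_nonneg _)
    have e2 : 0 ≤ (c - b) * (p - q) ^ 2 := mul_nonneg (by linarith) (sq_nonneg _)
    linarith
  have hs : ∀ U : SWState, 0 < U.h → |U.Bx| ≤ Real.sqrt (g * U.h + U.Bx ^ 2) := by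
    intro U hU
    apply Real.abs_le_sqrt
    have := mul_pos hg hU
    linarith
  have h1 := (le_max_left _ _).trans hα
  have h2 := (le_max_right _ _).trans hα
  have hl := hs L hL
  have hr := hs R hR
  have k1 := mul_nonneg hL.le (key (-L.Bx) (α + L.vx) (R.vx - L.vx) (R.Bx - L.Bx)
    (by rw [abs_neg]; linarith [neg_abs_le L.vx]))
  have k2 := mul_nonneg hR.le (key R.Bx (α - R.vx) (R.vx - L.vx) (R.Bx - L.Bx)
    (by linarith [le_abs_self R.vx]))
  simp only [ajump, amean]
  linarith
end
end

section
/- Let g > 0 and let L, R be two states with h_L > 0 and h_R > 0, and let α ≥ max(|vx_L| + √(g·h_L + Bx_L²), |vx_R| + √(g·h_R + Bx_R²)). Then C := ¼·([vy]² + [By]²)·([h·vx] − 2α⟨h⟩) − ½·[h·Bx]·[vy]·[By] ≤ 0. -/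
open scoped BigOperators
noncomputable section
open Matrix

open SWMHD

/-- the term `C` in the entropy production decomposition of the
Lax–Friedrichs flux is nonpositive. -/
theorem termC_nonpos (g : ℝ) (hg : 0 < g) (L R : SWState)
    (hL : 0 < L.h) (hR : 0 < R.h) (α : ℝ)
    (hα : max (|L.vx| + Real.sqrt (g * L.h + L.Bx ^ 2))
              (|R.vx| + Real.sqrt (g * R.h + R.Bx ^ 2)) ≤ α) :
    (1 / 4) * ((ajump (fun U => U.vy) L R) ^ 2 + (ajump (fun U => U.By) L R) ^ 2)
        * (ajump (fun U => U.h * U.vx) L R - 2 * α * amean (fun U => U.h) L R)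
      - (1 / 2) * ajump (fun U => U.h * U.Bx) L R
        * ajump (fun U => U.vy) L R * ajump (fun U => U.By) L R ≤ 0 := by
  have key : ∀ U : SWState, 0 < U.h →
      |U.vx| + Real.sqrt (g * U.h + U.Bx ^ 2) ≤ α → |U.vx| + |U.Bx| ≤ α := by
    intro U hU h
    have h1 : |U.Bx| ≤ Real.sqrt (g * U.h + U.Bx ^ 2) := by
      apply Real.abs_le_sqrt
      have := mul_pos hg hU
      linarith
    linarith
  have kL := key L hL ((le_max_left _ _).trans hα)
  have kR := key R hR ((le_max_right _ _).trans hα)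
  have a1 := neg_abs_le L.vx
  have a2 := neg_abs_le L.Bx
  have a3 := le_abs_self L.Bx
  have b1 := le_abs_self R.vx
  have b2 := neg_abs_le R.Bx
  have b3 := le_abs_self R.Bx
  have l1 : 0 ≤ L.h * (α + L.vx + L.Bx) := mul_nonneg hL.le (by linarith)
  have l2 : 0 ≤ L.h * (α + L.vx - L.Bx) := mul_nonneg hL.le (by linarith)
  have r1 : 0 ≤ R.h * (α - R.vx + R.Bx) := mul_nonneg hR.le (by linarith)
  have r2 : 0 ≤ R.h * (α - R.vx - R.Bx) := mul_nonneg hR.le (by linarith)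
  have m1 := mul_nonneg (sq_nonneg ((R.vy - L.vy) + (R.By - L.By))) (add_nonneg l2 r1)
  have m2 := mul_nonneg (sq_nonneg ((R.vy - L.vy) - (R.By - L.By))) (add_nonneg l1 r2)
  simp only [ajump, amean]
  linarith
end
end

section
/- (Entropy identity for smooth solutions of the modified 1D SWMHD system.) Let g be real and let h, vx, vy, Bx, By : ℝ × ℝ → ℝ be continuously differentiable functions of (x,t) with h > 0 everywhere, and b : ℝ → ℝ continuously differentiable. Suppose the modified 1D SWMHD equations with the Janhunen source term hold pointwise: ∂ₜh + ∂ₓ(h·vx) = 0; ∂ₜ(h·vx) + ∂ₓ(h·vx² − h·Bx² + ½g·h²) = −g·h·b′(x); ∂ₜ(h·vy) + ∂ₓ(h·vx·vy − h·Bx·By) = 0; ∂ₜ(h·Bx) = −vx·∂ₓ(h·Bx); ∂ₜ(h·By) + ∂ₓ(h·(vx·By − Bx·vy)) = −vy·∂ₓ(h·Bx). Then the entropy identity ∂ₜη + ∂ₓq₁ = 0 holds pointwise, where η := ½h(vx²+vy²+Bx²+By²) + ½g·h² + g·h·b and q₁ := (½(vx²+vy²+Bx²+By²) + g·h + g·b)·h·vx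 − h·Bx·(vx·Bx + vy·By). -/
noncomputable section

/-- Partial derivative with respect to the first (space) variable. -/
def px (f : ℝ → ℝ → ℝ) (x t : ℝ) : ℝ := deriv (fun x' => f x' t) x

/-- Partial derivative with respect to the second (time) variable. -/
def pt (f : ℝ → ℝ → ℝ) (x t : ℝ) : ℝ := deriv (fun t' => f x t') t

/-- Slices of a `C¹` function of two variables are differentiable. -/
theorem slice_hasDerivAt (f : ℝ → ℝ → ℝ) (hf : ContDiff ℝ 1 (Function.uncurry f)) (x t : ℝ) :
    HasDerivAt (fun x' => f x' t) (px f x t) x ∧ HasDerivAt (fun t' => f x t') (pt f x t) t := by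
  have hd : Differentiable ℝ (Function.uncurry f) := hf.differentiable (by norm_num)
  constructor
  · have : Differentiable ℝ (fun x' : ℝ => Function.uncurry f (x', t)) :=
      hd.comp (differentiable_id.prodMk (differentiable_const t))
    exact (this x).hasDerivAt
  · have : Differentiable ℝ (fun t' : ℝ => Function.uncurry f (x, t')) :=
      hd.comp ((differentiable_const x).prodMk differentiable_id)
    exact (this t).hasDerivAt

/-- entropy identity for smooth solutions of the modified 1D
SWMHD system with the Janhunen source term: `∂ₜη + ∂ₓq₁ = 0`. -/
theorem smooth_entropy_identity (g : ℝ)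
    (h vx vy Bx By : ℝ → ℝ → ℝ) (b : ℝ → ℝ)
    (hh : ContDiff ℝ 1 (Function.uncurry h))
    (hvx : ContDiff ℝ 1 (Function.uncurry vx))
    (hvy : ContDiff ℝ 1 (Function.uncurry vy))
    (hBx : ContDiff ℝ 1 (Function.uncurry Bx))
    (hBy : ContDiff ℝ 1 (Function.uncurry By))
    (hb : ContDiff ℝ 1 b)
    (hpos : ∀ x t, 0 < h x t)
    (eq1 : ∀ x t, pt h x t + px (fun x t => h x t * vx x t) x t = 0)
    (eq2 : ∀ x t, pt (fun x t => h x t * vx x t) x t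
      + px (fun x t => h x t * vx x t ^ 2 - h x t * Bx x t ^ 2 + g * h x t ^ 2 / 2) x t
      = -(g * h x t * deriv b x))
    (eq3 : ∀ x t, pt (fun x t => h x t * vy x t) x t
      + px (fun x t => h x t * vx x t * vy x t - h x t * Bx x t * By x t) x t = 0)
    (eq4 : ∀ x t, pt (fun x t => h x t * Bx x t) x t
      = -(vx x t * px (fun x t => h x t * Bx x t) x t))
    (eq5 : ∀ x t, pt (fun x t => h x t * By x t) x t
      + px (fun x t => h x t * (vx x t * By x t - Bx x t * vy x t)) x t
      = -(vy x t * px (fun x t => h x t * Bx x t) x t)) :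
    ∀ x t,
      pt (fun x t => h x t * (vx x t ^ 2 + vy x t ^ 2 + Bx x t ^ 2 + By x t ^ 2) / 2
        + g * h x t ^ 2 / 2 + g * h x t * b x) x t
      + px (fun x t => ((vx x t ^ 2 + vy x t ^ 2 + Bx x t ^ 2 + By x t ^ 2) / 2
            + g * h x t + g * b x) * h x t * vx x t
          - h x t * Bx x t * (vx x t * Bx x t + vy x t * By x t)) x t = 0 := by
  intro x t
  obtain ⟨Hx, Ht⟩ := slice_hasDerivAt h hh x t
  obtain ⟨Ux, Ut⟩ := slice_hasDerivAt vx hvx x t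
  obtain ⟨Vx, Vt⟩ := slice_hasDerivAt vy hvy x t
  obtain ⟨Ax, At⟩ := slice_hasDerivAt Bx hBx x t
  obtain ⟨Cx, Ct⟩ := slice_hasDerivAt By hBy x t
  have Hb : HasDerivAt b (deriv b x) x :=
    ((hb.differentiable (by norm_num)) x).hasDerivAt
  have e1 := eq1 x t
  have e2 := eq2 x t
  have e3 := eq3 x t
  have e4 := eq4 x t
  have e5 := eq5 x t
  have d1 : px (fun x t => h x t * vx x t) x t = _ := (Hx.fun_mul Ux).deriv
  have d2 : pt (fun x t => h x t * vx x t) x t = _ := (Ht.fun_mul Ut).deriv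
  have d3 : px (fun x t => h x t * vx x t ^ 2 - h x t * Bx x t ^ 2 + g * h x t ^ 2 / 2) x t = _ :=
    (((Hx.fun_mul (Ux.fun_pow 2)).fun_sub (Hx.fun_mul (Ax.fun_pow 2))).fun_add
      (((Hx.fun_pow 2).const_mul g).div_const 2)).deriv
  have d4 : pt (fun x t => h x t * vy x t) x t = _ := (Ht.fun_mul Vt).deriv
  have d5 : px (fun x t => h x t * vx x t * vy x t - h x t * Bx x t * By x t) x t = _ :=
    (((Hx.fun_mul Ux).fun_mul Vx).fun_sub ((Hx.fun_mul Ax).fun_mul Cx)).deriv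
  have d6 : pt (fun x t => h x t * Bx x t) x t = _ := (Ht.fun_mul At).deriv
  have d7 : px (fun x t => h x t * Bx x t) x t = _ := (Hx.fun_mul Ax).deriv
  have d8 : pt (fun x t => h x t * By x t) x t = _ := (Ht.fun_mul Ct).deriv
  have d9 : px (fun x t => h x t * (vx x t * By x t - Bx x t * vy x t)) x t = _ :=
    (Hx.fun_mul ((Ux.fun_mul Cx).fun_sub (Ax.fun_mul Vx))).deriv
  have d10 : pt (fun x t => h x t * (vx x t ^ 2 + vy x t ^ 2 + Bx x t ^ 2 + By x t ^ 2) / 2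
        + g * h x t ^ 2 / 2 + g * h x t * b x) x t = _ :=
    ((((Ht.fun_mul ((((Ut.fun_pow 2).fun_add (Vt.fun_pow 2)).fun_add (At.fun_pow 2)).fun_add
      (Ct.fun_pow 2))).div_const 2).fun_add (((Ht.fun_pow 2).const_mul g).div_const 2)).fun_add
      ((Ht.const_mul g).mul_const (b x))).deriv
  have d11 : px (fun x t => ((vx x t ^ 2 + vy x t ^ 2 + Bx x t ^ 2 + By x t ^ 2) / 2
            + g * h x t + g * b x) * h x t * vx x t
          - h x t * Bx x t * (vx x t * Bx x t + vy x t * By x t)) x t = _ :=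
    (((((((((Ux.fun_pow 2).fun_add (Vx.fun_pow 2)).fun_add (Ax.fun_pow 2)).fun_add
      (Cx.fun_pow 2)).div_const 2).fun_add (Hx.const_mul g)).fun_add
      (Hb.const_mul g)).fun_mul Hx).fun_mul Ux |>.fun_sub
      ((Hx.fun_mul Ax).fun_mul ((Ux.fun_mul Ax).fun_add (Vx.fun_mul Cx)))).deriv
  rw [d1] at e1
  rw [d2, d3] at e2
  rw [d4, d5] at e3
  rw [d6, d7] at e4
  rw [d8, d9, d7] at e5
  rw [d10, d11]
  push_cast at *
  linear_combination (g * (h x t + b x)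
      - (vx x t ^ 2 + vy x t ^ 2 + Bx x t ^ 2 + By x t ^ 2) / 2) * e1
    + vx x t * e2 + vy x t * e3 + Bx x t * e4 + By x t * e5
end
end

section
/- (The positivity-preserving flux limiter preserves the lower bound.) Let ε be a real number and let h_LF⁺, h_LF⁻, h_k⁺, h_k⁻ be real numbers with h_LF⁺ > ε and h_LF⁻ > ε. Define θ^± := (h_LF^± − ε)/(h_LF^± − h_k^±) if h_k^± < ε, and θ^± := 1 otherwise, and set θ := min(θ⁺, θ⁻). Then θ ∈ [0,1] and the limited update satisfies ½·(θ·h_k⁺ + (1−θ)·h_LF⁺) + ½·(θ·h_k⁻ + (1−θ)·h_LF⁻) ≥ ε. -/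
theorem pp_theta_bounds (ε a k : ℝ) (h : ε < a) :
    0 ≤ (if k < ε then (a - ε) / (a - k) else 1) ∧
    (if k < ε then (a - ε) / (a - k) else 1) ≤ 1 := by
  split_ifs with hk
  · have hp : 0 < a - k := by linarith
    exact ⟨div_nonneg (by linarith) hp.le, by rw [div_le_one hp]; linarith⟩
  · exact ⟨zero_le_one, le_refl _⟩

theorem pp_side_bound (ε a k t : ℝ) (h : ε < a) (h0 : 0 ≤ t) (h1 : t ≤ 1)
    (ht : t ≤ (if k < ε then (a - ε) / (a - k) else 1)) :
    ε ≤ t * k + (1 - t) * a := by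
  split_ifs at ht with hk
  · have hp : 0 < a - k := by linarith
    rw [le_div_iff₀ hp] at ht
    linarith
  · have hk' : ε ≤ k := not_lt.mp hk
    nlinarith [mul_nonneg h0 (sub_nonneg.2 hk'), mul_nonneg (sub_nonneg.2 h1) (sub_nonneg.2 h.le)]

/-- the positivity-preserving flux limiter preserves the lower
bound: the scaling factor `θ` lies in `[0,1]` and the limited update of the
water height stays at or above the threshold `ε`. -/
theorem pp_limiter_preserves_bound (ε hLFp hLFm hkp hkm : ℝ)
    (h1 : ε < hLFp) (h2 : ε < hLFm) :
    (min (if hkp < ε then (hLFp - ε) / (hLFp - hkp) else 1)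
         (if hkm < ε then (hLFm - ε) / (hLFm - hkm) else 1)) ∈ Set.Icc (0 : ℝ) 1 ∧
    ε ≤ (min (if hkp < ε then (hLFp - ε) / (hLFp - hkp) else 1)
             (if hkm < ε then (hLFm - ε) / (hLFm - hkm) else 1) * hkp
          + (1 - min (if hkp < ε then (hLFp - ε) / (hLFp - hkp) else 1)
                 (if hkm < ε then (hLFm - ε) / (hLFm - hkm) else 1)) * hLFp) / 2
        + (min (if hkp < ε then (hLFp - ε) / (hLFp - hkp) else 1)
               (if hkm < ε then (hLFm - ε) / (hLFm - hkm) else 1) * hkm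
          + (1 - min (if hkp < ε then (hLFp - ε) / (hLFp - hkp) else 1)
                 (if hkm < ε then (hLFm - ε) / (hLFm - hkm) else 1)) * hLFm) / 2 := by
  obtain ⟨p0, p1⟩ := pp_theta_bounds ε hLFp hkp h1
  obtain ⟨m0, m1⟩ := pp_theta_bounds ε hLFm hkm h2
  have t0 := le_min p0 m0
  have t1 := fun y : ℝ => (min_le_left _ y).trans p1
  refine ⟨⟨t0, t1 _⟩, ?_⟩
  have e1 := pp_side_bound ε hLFp hkp _ h1 t0 (t1 _) (min_le_left _ _)
  have e2 := pp_side_bound ε hLFm hkm _ h2 t0 (t1 _) (min_le_right _ _)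
  linarith
end

section
/- (Entropy stability of the switched high-order dissipation.) Let R be a 5×5 real matrix, let V_jump ∈ ℝ⁵, set w := Rᵀ·V_jump, let w̃ ∈ ℝ⁵ be arbitrary (the reconstructed jump), and let α ≥ 0. Define the diagonal matrix S with entries S_l := 1 if w̃_l and w_l have the same sign and both are nonzero (sign(w̃_l) = sign(w_l) ≠ 0), and S_l := 0 otherwise. Then V_jump · (½·α·R·S·w̃) = ½·α·Σ_l S_l·w_l·w̃_l ≥ 0. Consequently, for two states L, R with jump of entropy variables [V] = V_jump, if F̃ satisfies the entropy conservation condition, then the flux F̂ := F̃ − ½·α·R·S·w̃ satisfies the entropy stability inequality [V]·F̂ − [ψ₁] + [Φ]⟨hBx⟩ − g[h·b·vx] + g[h·vx]⟨b⟩ ≤ 0. -/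
open scoped BigOperators
noncomputable section
open Matrix

open SWMHD

/-- entropy stability of the switched high-order dissipation.
With `w = Rᵀ·V_jump` and the diagonal switch `S` keeping only the components
where the reconstructed jump `w̃` has the same (nonzero) sign as `w`, the
dissipation contributes `½ α Σ S_l w_l w̃_l ≥ 0`, and consequently the flux
`F̂ = F̃ − ½ α R S w̃` is entropy stable whenever `F̃` satisfies the entropy
conservation condition. -/
theorem switched_dissipation_entropy_stable (g α : ℝ) (hα : 0 ≤ α)
    (Rm : Matrix (Fin 5) (Fin 5) ℝ) (Vjump wtilde : Fin 5 → ℝ) :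
    (Vjump ⬝ᵥ (fun k => (1 / 2) * α *
          Rm.mulVec (fun l =>
            (if Real.sign (wtilde l) = Real.sign (Rm.transpose.mulVec Vjump l) ∧
                Real.sign (Rm.transpose.mulVec Vjump l) ≠ 0 then (1 : ℝ) else 0) * wtilde l) k)
        = (1 / 2) * α * ∑ l,
            (if Real.sign (wtilde l) = Real.sign (Rm.transpose.mulVec Vjump l) ∧
                Real.sign (Rm.transpose.mulVec Vjump l) ≠ 0 then (1 : ℝ) else 0)
              * Rm.transpose.mulVec Vjump l * wtilde l
      ∧ 0 ≤ (1 / 2) * α * ∑ l,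
            (if Real.sign (wtilde l) = Real.sign (Rm.transpose.mulVec Vjump l) ∧
                Real.sign (Rm.transpose.mulVec Vjump l) ≠ 0 then (1 : ℝ) else 0)
              * Rm.transpose.mulVec Vjump l * wtilde l)
    ∧ ∀ (L R' : SWState) (Ftilde : Fin 5 → ℝ),
        vjump g L R' = Vjump →
        ecCondition g Ftilde L R' →
        Vjump ⬝ᵥ (fun k => Ftilde k - (1 / 2) * α *
            Rm.mulVec (fun l =>
              (if Real.sign (wtilde l) = Real.sign (Rm.transpose.mulVec Vjump l) ∧
                  Real.sign (Rm.transpose.mulVec Vjump l) ≠ 0 then (1 : ℝ) else 0) * wtilde l) k)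
          - ajump (psi1 g) L R'
          + ajump Phi L R' * amean (fun U => U.h * U.Bx) L R'
          - g * ajump (fun U => U.h * U.b * U.vx) L R'
          + g * ajump (fun U => U.h * U.vx) L R' * amean (fun U => U.b) L R' ≤ 0 := by
  have key : ∀ (c : ℝ) (s : Fin 5 → ℝ),
      Vjump ⬝ᵥ (fun k => c * Rm.mulVec (fun l => s l * wtilde l) k)
        = c * ∑ l, s l * Rm.transpose.mulVec Vjump l * wtilde l := by
    intro c s
    have h1 : (fun k => c * Rm.mulVec (fun l => s l * wtilde l) k)
        = c • Rm.mulVec (fun l => s l * wtilde l) := by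
      ext k
      simp
    rw [h1, dotProduct_smul, dotProduct_mulVec, ← mulVec_transpose, smul_eq_mul]
    congr 1
    simp only [dotProduct]
    exact Finset.sum_congr rfl fun l _ => by ring
  have hs : ∀ a b : ℝ, 0 ≤ (if Real.sign a = Real.sign b ∧ Real.sign b ≠ 0
      then (1 : ℝ) else 0) * b * a := by
    intro a b
    split_ifs with h
    · obtain ⟨h1, h2⟩ := h
      rcases lt_trichotomy b 0 with hb | hb | hb <;>
        rcases lt_trichotomy a 0 with ha | ha | ha
      all_goals first
        | (subst hb; simp at h2; done)
        | (subst ha; simp; done)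
        | nlinarith
        | (exfalso
           simp only [Real.sign_of_neg, Real.sign_of_pos, ha, hb] at h1
           norm_num at h1)
    · simp
  have hnn : 0 ≤ (1 / 2) * α * ∑ l,
      (if Real.sign (wtilde l) = Real.sign (Rm.transpose.mulVec Vjump l) ∧
          Real.sign (Rm.transpose.mulVec Vjump l) ≠ 0 then (1 : ℝ) else 0)
        * Rm.transpose.mulVec Vjump l * wtilde l :=
    mul_nonneg (by positivity) (Finset.sum_nonneg fun l _ => hs _ _)
  have heq := key ((1 / 2) * α) (fun l =>
    if Real.sign (wtilde l) = Real.sign (Rm.transpose.mulVec Vjump l) ∧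
      Real.sign (Rm.transpose.mulVec Vjump l) ≠ 0 then (1 : ℝ) else 0)
  refine ⟨⟨heq, hnn⟩, ?_⟩
  intro L R' Ftilde hV hec
  unfold ecCondition at hec
  rw [hV] at hec
  have hsub : ∀ G : Fin 5 → ℝ, Vjump ⬝ᵥ (fun k => Ftilde k - G k)
      = Vjump ⬝ᵥ Ftilde - Vjump ⬝ᵥ G := fun G => dotProduct_sub Vjump Ftilde G
  rw [hsub (fun k => (1 / 2) * α * Rm.mulVec (fun l =>
    (if Real.sign (wtilde l) = Real.sign (Rm.transpose.mulVec Vjump l) ∧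
      Real.sign (Rm.transpose.mulVec Vjump l) ≠ 0 then (1 : ℝ) else 0) * wtilde l) k),
    hec, heq]
  linarith
end
end

section
/- (Well-balanced property of the 2D EC scheme.) Let g and C be real numbers and consider 2D grid states U_{i,j} with bottom values b_{i,j} (for the five grid points (i,j), (i±1,j), (i,j±1)) satisfying vx = vy = Bx = By = 0 at every grid point and h_{i,j} + b_{i,j} = C at every grid point. Then the right-hand side of the 2D semi-discrete EC scheme at (i,j) vanishes: (F̃₁(U_{i,j},U_{i+1,j}) − F̃₁(U_{i−1,j},U_{i,j}))/Δx + (F̃₂(U_{i,j},U_{i,j+1}) − F̃₂(U_{i,j−1},U_{i,j}))/Δy + Ψ_{i,j}ᵀ[(⟨hBx⟩_{i+1/2,j} − ⟨hBx⟩_{i−1/2,j})/Δx + (⟨hBy⟩_{i,j+1/2} − ⟨hBy⟩_{i,j−1/2})/Δy] + (G₁)_{i,j}ᵀ(⟨b⟩_{i+1/2,j} − ⟨b⟩_{i−1/2,j})/Δx + (G₂)_{i,j}ᵀ(⟨b⟩_{i,j+1/2} − ⟨b⟩_{i,j−1/2})/Δy = 0 ∈ ℝ⁵, for any mesh sizes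 Δx, Δy > 0. -/
open scoped BigOperators
noncomputable section
open Matrix

open SWMHD

namespace SWMHD

/-- The y-directional EC flux `F̃₂(L,R)`. -/
def ecFluxY (g : ℝ) (L R : SWState) : Fin 5 → ℝ :=
  ![amean (fun U => U.h) L R * amean (fun U => U.vy) L R,
    amean (fun U => U.h) L R * amean (fun U => U.vy) L R * amean (fun U => U.vx) L R
      - amean (fun U => U.h * U.By) L R * amean (fun U => U.Bx) L R,
    amean (fun U => U.h) L R * (amean (fun U => U.vy) L R) ^ 2
      + g / 2 * amean (fun U => U.h ^ 2) L R
      - amean (fun U => U.h * U.By) L R * amean (fun U => U.By) L R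
      + g * (amean (fun U => U.h * U.b) L R
             - amean (fun U => U.h) L R * amean (fun U => U.b) L R),
    amean (fun U => U.h) L R * amean (fun U => U.vy) L R * amean (fun U => U.Bx) L R
      - amean (fun U => U.h * U.By) L R * amean (fun U => U.vx) L R,
    amean (fun U => U.h) L R * amean (fun U => U.vy) L R * amean (fun U => U.By) L R
      - amean (fun U => U.h * U.By) L R * amean (fun U => U.vy) L R]

/-- The y-directional bottom-topography source vector `G₂ = (0, 0, g h, 0, 0)`. -/
def G2Vec (g : ℝ) (U : SWState) : Fin 5 → ℝ := ![0, 0, g * U.h, 0, 0]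

end SWMHD

/-- well-balanced property of the 2D semi-discrete EC scheme.
If the velocity and magnetic field vanish and `h + b = C` at the five grid
points `(i,j)`, `(i±1,j)`, `(i,j±1)`, then the right-hand side of the 2D
semi-discrete EC scheme at `(i,j)` vanishes. -/
theorem well_balanced_2d (g C Δx Δy : ℝ) (hΔx : 0 < Δx) (hΔy : 0 < Δy)
    (Uc Uxm Uxp Uym Uyp : SWState)
    (hc : Uc.vx = 0 ∧ Uc.vy = 0 ∧ Uc.Bx = 0 ∧ Uc.By = 0 ∧ Uc.h + Uc.b = C)
    (hxm : Uxm.vx = 0 ∧ Uxm.vy = 0 ∧ Uxm.Bx = 0 ∧ Uxm.By = 0 ∧ Uxm.h + Uxm.b = C)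
    (hxp : Uxp.vx = 0 ∧ Uxp.vy = 0 ∧ Uxp.Bx = 0 ∧ Uxp.By = 0 ∧ Uxp.h + Uxp.b = C)
    (hym : Uym.vx = 0 ∧ Uym.vy = 0 ∧ Uym.Bx = 0 ∧ Uym.By = 0 ∧ Uym.h + Uym.b = C)
    (hyp : Uyp.vx = 0 ∧ Uyp.vy = 0 ∧ Uyp.Bx = 0 ∧ Uyp.By = 0 ∧ Uyp.h + Uyp.b = C) :
    (fun k => (ecFlux g Uc Uxp k - ecFlux g Uxm Uc k) / Δx
      + (ecFluxY g Uc Uyp k - ecFluxY g Uym Uc k) / Δy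
      + PsiVec Uc k *
          ((amean (fun U => U.h * U.Bx) Uc Uxp - amean (fun U => U.h * U.Bx) Uxm Uc) / Δx
            + (amean (fun U => U.h * U.By) Uc Uyp - amean (fun U => U.h * U.By) Uym Uc) / Δy)
      + G1Vec g Uc k * (amean (fun U => U.b) Uc Uxp - amean (fun U => U.b) Uxm Uc) / Δx
      + G2Vec g Uc k * (amean (fun U => U.b) Uc Uyp - amean (fun U => U.b) Uym Uc) / Δy)
      = (0 : Fin 5 → ℝ) := by
  obtain ⟨c1, c2, c3, c4, c5⟩ := hc
  obtain ⟨l1, l2, l3, l4, l5⟩ := hxm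
  obtain ⟨r1, r2, r3, r4, r5⟩ := hxp
  obtain ⟨d1, d2, d3, d4, d5⟩ := hym
  obtain ⟨u1, u2, u3, u4, u5⟩ := hyp
  have c6 : Uc.b = C - Uc.h := by linarith
  have l6 : Uxm.b = C - Uxm.h := by linarith
  have r6 : Uxp.b = C - Uxp.h := by linarith
  have d6 : Uym.b = C - Uym.h := by linarith
  have u6 : Uyp.b = C - Uyp.h := by linarith
  funext k
  fin_cases k <;>
    simp [ecFlux, ecFluxY, PsiVec, G1Vec, G2Vec, amean, c1, c2, c3, c4, c6, l1, l2, l3, l4, l6,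
      r1, r2, r3, r4, r6, d1, d2, d3, d4, d6, u1, u2, u3, u4, u6] <;>
    ring
end
end

section
/- (The moving vortex is an exact steady solution.) Let g > 0 and v_max, B_max, h_max be real numbers, and define on ℝ² the fields h(x,y) := h_max − (v_max² − B_max²)·e^{1−x²−y²}/(2g), (vx,vy)(x,y) := v_max·e^{(1−x²−y²)/2}·(−y, x), (Bx,By)(x,y) := B_max·e^{(1−x²−y²)/2}·(−y, x). Then these fields satisfy the steady 2D shallow water MHD equations with flat bottom: ∂ₓ(h·vx) + ∂_y(h·vy) = 0; ∂ₓ(h·vx² − h·Bx² + ½g·h²) + ∂_y(h·vx·vy − h·Bx·By) = 0; ∂ₓ(h·vx·vy − h·Bx·By) + ∂_y(h·vy² − h·By² + ½g·h²) = 0; ∂_y(h·(vy·Bx − By·vx)) = 0; ∂ₓ(h·(vx·By − Bx·vy)) = 0; and the divergence-free condition ∂ₓ(h·Bx) + ∂_y(h·By) = 0. -/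
noncomputable section

/-- Water height of the vortex. -/
def vH (g vmax Bmax hmax : ℝ) (x y : ℝ) : ℝ :=
  hmax - (vmax ^ 2 - Bmax ^ 2) * Real.exp (1 - x ^ 2 - y ^ 2) / (2 * g)

/-- x-velocity of the vortex. -/
def vVX (vmax : ℝ) (x y : ℝ) : ℝ := vmax * Real.exp ((1 - x ^ 2 - y ^ 2) / 2) * (-y)

/-- y-velocity of the vortex. -/
def vVY (vmax : ℝ) (x y : ℝ) : ℝ := vmax * Real.exp ((1 - x ^ 2 - y ^ 2) / 2) * x

/-- x-magnetic field of the vortex. -/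
def vBX (Bmax : ℝ) (x y : ℝ) : ℝ := Bmax * Real.exp ((1 - x ^ 2 - y ^ 2) / 2) * (-y)

/-- y-magnetic field of the vortex. -/
def vBY (Bmax : ℝ) (x y : ℝ) : ℝ := Bmax * Real.exp ((1 - x ^ 2 - y ^ 2) / 2) * x

lemma hasDerivAt_half_x (x y : ℝ) :
    HasDerivAt (fun x' : ℝ => Real.exp ((1 - x' ^ 2 - y ^ 2) / 2))
      (-x * Real.exp ((1 - x ^ 2 - y ^ 2) / 2)) x := by
  have h := (((((hasDerivAt_id x).pow 2).const_sub 1).sub_const (y ^ 2)).div_const 2).exp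
  refine h.congr_deriv ?_
  simp
  ring

lemma hasDerivAt_half_y (x y : ℝ) :
    HasDerivAt (fun y' : ℝ => Real.exp ((1 - x ^ 2 - y' ^ 2) / 2))
      (-y * Real.exp ((1 - x ^ 2 - y ^ 2) / 2)) y := by
  have h := ((((hasDerivAt_id y).pow 2).const_sub (1 - x ^ 2)).div_const 2).exp
  refine h.congr_deriv ?_
  simp
  ring

lemma vH_eq (g vmax Bmax hmax x y : ℝ) : vH g vmax Bmax hmax x y =
    hmax - (vmax ^ 2 - Bmax ^ 2) * Real.exp ((1 - x ^ 2 - y ^ 2) / 2) ^ 2 / (2 * g) := by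
  rw [vH, ← Real.exp_nat_mul]
  congr 4
  push_cast
  ring

lemma hasDerivAt_vH_x (g vmax Bmax hmax x y : ℝ) :
    HasDerivAt (fun x' => vH g vmax Bmax hmax x' y)
      ((vmax ^ 2 - Bmax ^ 2) * x * Real.exp ((1 - x ^ 2 - y ^ 2) / 2) ^ 2 / g) x := by
  simp only [vH_eq]
  refine (((((hasDerivAt_half_x x y).pow 2).const_mul (vmax ^ 2 - Bmax ^ 2)).div_const
    (2 * g)).const_sub hmax).congr_deriv ?_
  by_cases hg : g = 0
  · simp [hg]
  · field_simp
    push_cast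
    ring

lemma hasDerivAt_vH_y (g vmax Bmax hmax x y : ℝ) :
    HasDerivAt (fun y' => vH g vmax Bmax hmax x y')
      ((vmax ^ 2 - Bmax ^ 2) * y * Real.exp ((1 - x ^ 2 - y ^ 2) / 2) ^ 2 / g) y := by
  simp only [vH_eq]
  refine (((((hasDerivAt_half_y x y).pow 2).const_mul (vmax ^ 2 - Bmax ^ 2)).div_const
    (2 * g)).const_sub hmax).congr_deriv ?_
  by_cases hg : g = 0
  · simp [hg]
  · field_simp
    push_cast
    ring

lemma hasDerivAt_vVX_x (c x y : ℝ) : HasDerivAt (fun x' => vVX c x' y)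
    (c * (-x * Real.exp ((1 - x ^ 2 - y ^ 2) / 2)) * (-y)) x :=
  ((hasDerivAt_half_x x y).const_mul c).mul_const (-y)

lemma hasDerivAt_vVY_y (c x y : ℝ) : HasDerivAt (fun y' => vVY c x y')
    (c * (-y * Real.exp ((1 - x ^ 2 - y ^ 2) / 2)) * x) y :=
  ((hasDerivAt_half_y x y).const_mul c).mul_const x

lemma hasDerivAt_vVX_y (c x y : ℝ) : HasDerivAt (fun y' => vVX c x y')
    (c * (-y * Real.exp ((1 - x ^ 2 - y ^ 2) / 2)) * (-y)
      + c * Real.exp ((1 - x ^ 2 - y ^ 2) / 2) * (-1)) y :=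
  ((hasDerivAt_half_y x y).const_mul c).mul (hasDerivAt_id y).neg

lemma hasDerivAt_vVY_x (c x y : ℝ) : HasDerivAt (fun x' => vVY c x' y)
    (c * (-x * Real.exp ((1 - x ^ 2 - y ^ 2) / 2)) * x
      + c * Real.exp ((1 - x ^ 2 - y ^ 2) / 2) * 1) x :=
  ((hasDerivAt_half_x x y).const_mul c).mul (hasDerivAt_id x)

lemma vBX_eq : vBX = vVX := rfl

lemma vBY_eq : vBY = vVY := rfl

/-- the vortex is an exact steady solution of the 2D shallow
water MHD equations with flat bottom, and it satisfies the divergence-free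
condition. -/
theorem vortex_is_steady_solution (g vmax Bmax hmax : ℝ) (hg : 0 < g) :
    ∀ x y : ℝ,
      (deriv (fun x' => vH g vmax Bmax hmax x' y * vVX vmax x' y) x
        + deriv (fun y' => vH g vmax Bmax hmax x y' * vVY vmax x y') y = 0)
      ∧ (deriv (fun x' => vH g vmax Bmax hmax x' y * vVX vmax x' y ^ 2
            - vH g vmax Bmax hmax x' y * vBX Bmax x' y ^ 2
            + g * vH g vmax Bmax hmax x' y ^ 2 / 2) x
          + deriv (fun y' => vH g vmax Bmax hmax x y' * vVX vmax x y' * vVY vmax x y'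
            - vH g vmax Bmax hmax x y' * vBX Bmax x y' * vBY Bmax x y') y = 0)
      ∧ (deriv (fun x' => vH g vmax Bmax hmax x' y * vVX vmax x' y * vVY vmax x' y
            - vH g vmax Bmax hmax x' y * vBX Bmax x' y * vBY Bmax x' y) x
          + deriv (fun y' => vH g vmax Bmax hmax x y' * vVY vmax x y' ^ 2
            - vH g vmax Bmax hmax x y' * vBY Bmax x y' ^ 2
            + g * vH g vmax Bmax hmax x y' ^ 2 / 2) y = 0)
      ∧ (deriv (fun y' => vH g vmax Bmax hmax x y' *
            (vVY vmax x y' * vBX Bmax x y' - vBY Bmax x y' * vVX vmax x y')) y = 0)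
      ∧ (deriv (fun x' => vH g vmax Bmax hmax x' y *
            (vVX vmax x' y * vBY Bmax x' y - vBX Bmax x' y * vVY vmax x' y)) x = 0)
      ∧ (deriv (fun x' => vH g vmax Bmax hmax x' y * vBX Bmax x' y) x
          + deriv (fun y' => vH g vmax Bmax hmax x y' * vBY Bmax x y') y = 0) := by
  intro x y
  rw [vBX_eq, vBY_eq]
  have hgne : g ≠ 0 := hg.ne'
  have Hx := hasDerivAt_vH_x g vmax Bmax hmax x y
  have Hy := hasDerivAt_vH_y g vmax Bmax hmax x y
  have VXx := hasDerivAt_vVX_x vmax x y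
  have VXy := hasDerivAt_vVX_y vmax x y
  have VYx := hasDerivAt_vVY_x vmax x y
  have VYy := hasDerivAt_vVY_y vmax x y
  have BXx := hasDerivAt_vVX_x Bmax x y
  have BXy := hasDerivAt_vVX_y Bmax x y
  have BYx := hasDerivAt_vVY_x Bmax x y
  have BYy := hasDerivAt_vVY_y Bmax x y
  refine ⟨?_, ?_, ?_, ?_, ?_, ?_⟩
  · have h1 := (Hx.mul VXx).deriv
    have h2 := (Hy.mul VYy).deriv
    refine (congrArg₂ (· + ·) h1 h2).trans ?_
    simp only [vVX, vVY]
    ring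
  · have h1 := (((Hx.mul (VXx.pow 2)).sub (Hx.mul (BXx.pow 2))).add
      (((Hx.pow 2).const_mul g).div_const 2)).deriv
    have h2 := (((Hy.mul VXy).mul VYy).sub ((Hy.mul BXy).mul BYy)).deriv
    refine (congrArg₂ (· + ·) h1 h2).trans ?_
    simp only [vVX, vVY, Pi.mul_apply, Pi.pow_apply]
    field_simp
    push_cast
    ring
  · have h1 := (((Hx.mul VXx).mul VYx).sub ((Hx.mul BXx).mul BYx)).deriv
    have h2 := (((Hy.mul (VYy.pow 2)).sub (Hy.mul (BYy.pow 2))).add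
      (((Hy.pow 2).const_mul g).div_const 2)).deriv
    refine (congrArg₂ (· + ·) h1 h2).trans ?_
    simp only [vVX, vVY, Pi.mul_apply, Pi.pow_apply]
    field_simp
    push_cast
    ring
  · refine (Hy.mul ((VYy.mul BXy).sub (BYy.mul VXy))).deriv.trans ?_
    simp only [vVX, vVY, Pi.mul_apply, Pi.sub_apply]
    ring
  · refine (Hx.mul ((VXx.mul BYx).sub (BXx.mul VYx))).deriv.trans ?_
    simp only [vVX, vVY, Pi.mul_apply, Pi.sub_apply]
    ring
  · have h1 := (Hx.mul BXx).deriv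
    have h2 := (Hy.mul BYy).deriv
    refine (congrArg₂ (· + ·) h1 h2).trans ?_
    simp only [vVX, vVY]
    ring
end
end
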